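/- The following are equivalent: (i) κ is weakly compact and λ^{<κ} < cov(M_{κ,κ}); (ii) I_{κ,λ}⁺ →_κ (I_{κ,λ}⁺)²; (iii) I_{κ,λ}⁺ →_{κ,κ} (I_{κ,λ}⁺; κ)². -/

import Mathlib

open Cardinal Set

namespace PaperFormal

noncomputable section

/-- The least (small) cardinality of a family `F : Set X` satisfying `P`. -/
def leastCard {X : Type 1} (P : Set X → Prop) : Cardinal.{0} :=
  sInf {c : Cardinal.{0} | ∃ F : Set X, P F ∧ Cardinal.lift.{1} c = #F}

/-- The collection of (codings of) functions from `κ` to `κ`. -/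
def funOn (κ : Cardinal.{0}) : Set (Ordinal.{0} → Ordinal.{0}) :=
  {f | ∀ α < κ.ord, f α < κ.ord}

/-- The unequality number `U_κ`. -/
def uneq (κ : Cardinal.{0}) : Cardinal.{0} :=
  leastCard fun F : Set (Ordinal.{0} → Ordinal.{0}) => F ⊆ funOn κ ∧
    ∀ g ∈ funOn κ, ∃ f ∈ F, {α | α < κ.ord ∧ f α = g α} = ∅

/-- The dominating number `d_κ`. -/
def domNum (κ : Cardinal.{0}) : Cardinal.{0} :=
  leastCard fun F : Set (Ordinal.{0} → Ordinal.{0}) => F ⊆ funOn κ ∧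
    ∀ g ∈ funOn κ, ∃ f ∈ F, ∀ α < κ.ord, g α < f α

/-- The number `d̄_κ`. -/
def domBar (κ : Cardinal.{0}) : Cardinal.{0} :=
  leastCard fun X : Set (Ordinal.{0} → Ordinal.{0}) => X ⊆ funOn κ ∧
    ∀ g ∈ funOn κ, ∃ x ⊆ X, x.Nonempty ∧ #x < Cardinal.lift.{1} κ ∧
      ∀ α < κ.ord, g α < sSup {o | ∃ f ∈ x, f α = o}

/-- The generalized Cantor space `^ρ2`, with points coded as subsets of `Iio ρ.ord`. -/
def cantor (ρ : Cardinal.{0}) : Set (Set Ordinal.{0}) := {x | x ⊆ Iio ρ.ord}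

/-- A forcing condition: a pair `(a, t)` with `t ⊆ a ⊆ Iio ρ.ord` and `|a| < ν`. -/
def IsCond (ν ρ : Cardinal.{0}) (a t : Set Ordinal.{0}) : Prop :=
  a ⊆ Iio ρ.ord ∧ t ⊆ a ∧ #a < Cardinal.lift.{1} ν

/-- The basic open set determined by a condition. -/
def basicOpen (ρ : Cardinal.{0}) (a t : Set Ordinal.{0}) : Set (Set Ordinal.{0}) :=
  {x | x ⊆ Iio ρ.ord ∧ x ∩ a = t}

/-- Dense open subsets of `^ρ2` (for the `<ν`-support topology). -/
def DenseOpen (ν ρ : Cardinal.{0}) (D : Set (Set Ordinal.{0})) : Prop :=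
  D ⊆ cantor ρ ∧
  (∀ x ∈ D, ∃ a t, IsCond ν ρ a t ∧ x ∈ basicOpen ρ a t ∧ basicOpen ρ a t ⊆ D) ∧
  (∀ a t, IsCond ν ρ a t → (basicOpen ρ a t ∩ D).Nonempty)

/-- Members of `M_{ν,ρ}`. -/
def Meager (ν ρ : Cardinal.{0}) (W : Set (Set Ordinal.{0})) : Prop :=
  W ⊆ cantor ρ ∧ ∃ X : Set (Set (Set Ordinal.{0})), X.Nonempty ∧
    #X ≤ Cardinal.lift.{1} ν ∧ (∀ D ∈ X, DenseOpen ν ρ D) ∧ W ∩ ⋂₀ X = ∅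

/-- The covering number for category `cov(M_{ν,ρ})`. -/
def covM (ν ρ : Cardinal.{0}) : Cardinal.{0} :=
  leastCard fun Y : Set (Set (Set Ordinal.{0})) =>
    (∀ W ∈ Y, Meager ν ρ W) ∧ ⋃₀ Y = cantor ρ

/-- A (`κ`-complete) ideal on `κ`. -/
structure IdealK (κ : Cardinal.{0}) where
  mem : Set (Set Ordinal.{0})
  subset_iio : ∀ A ∈ mem, A ⊆ Iio κ.ord
  singleton_mem : ∀ α < κ.ord, {α} ∈ mem
  subset_mem : ∀ A ∈ mem, ∀ B ⊆ A, B ∈ mem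
  sUnion_mem : ∀ X : Set (Set Ordinal.{0}), X ⊆ mem → #X < Cardinal.lift.{1} κ → ⋃₀ X ∈ mem
  ne_top : Iio κ.ord ∉ mem

/-- `J⁺`, the sets (⊆ κ) not in the ideal. -/
def IdealK.plus {κ : Cardinal.{0}} (J : IdealK κ) : Set (Set Ordinal.{0}) :=
  {A | A ⊆ Iio κ.ord ∧ A ∉ J.mem}

/-- `cof(J)`. -/
def IdealK.cof {κ : Cardinal.{0}} (J : IdealK κ) : Cardinal.{0} :=
  leastCard fun X : Set (Set Ordinal.{0}) =>
    X ⊆ J.mem ∧ ∀ A, A ∈ J.mem ↔ ∃ B ∈ X, A ⊆ B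

/-- `cof̄(J)`. -/
def IdealK.cofBar {κ : Cardinal.{0}} (J : IdealK κ) : Cardinal.{0} :=
  leastCard fun X : Set (Set Ordinal.{0}) =>
    X ⊆ J.mem ∧ ∀ A ∈ J.mem, ∃ x ⊆ X, #x < Cardinal.lift.{1} κ ∧ A ⊆ ⋃₀ x

/-- `non_κ(P)`. -/
def nonK (κ : Cardinal.{0}) (P : IdealK κ → Prop) : Cardinal.{0} :=
  sInf {c | ∃ J : IdealK κ, J.cof = c ∧ ¬ P J}

/-- `non̄_κ(P)`. -/
def nonBarK (κ : Cardinal.{0}) (P : IdealK κ → Prop) : Cardinal.{0} :=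
  sInf {c | ∃ J : IdealK κ, J.cofBar = c ∧ ¬ P J}

/-- Weak `P`-point. -/
def WeakPPoint {κ : Cardinal.{0}} (J : IdealK κ) : Prop :=
  ∀ A ∈ J.plus, ∀ f : Ordinal.{0} → Ordinal.{0},
    (∀ α ∈ A, f α < κ.ord) → (∀ β, {α ∈ A | f α = β} ∈ J.mem) →
    ∃ B ∈ J.plus, B ⊆ A ∧ ∀ β, #{α ∈ B | f α = β} < Cardinal.lift.{1} κ

/-- Weak `Q`-point. -/
def WeakQPoint {κ : Cardinal.{0}} (J : IdealK κ) : Prop :=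
  ∀ A ∈ J.plus, ∀ g ∈ funOn κ,
    ∃ B ∈ J.plus, B ⊆ A ∧ ∀ α ∈ B, ∀ β ∈ B, α < β → g α < β

/-- Weakly selective ideal. -/
def WeaklySelective {κ : Cardinal.{0}} (J : IdealK κ) : Prop :=
  WeakPPoint J ∧ WeakQPoint J

/-- Weak semi-`Q`-point. -/
def WeakSemiQPoint {κ : Cardinal.{0}} (J : IdealK κ) : Prop :=
  ∀ A ∈ J.plus, ∀ f : Ordinal.{0} → Ordinal.{0},
    (∀ α ∈ A, f α < κ.ord) →
    (∀ β, #{α ∈ A | f α = β} < Cardinal.lift.{1} κ) →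
    ∃ C ∈ J.plus, C ⊆ A ∧ ∀ β < κ.ord, #{α ∈ C | f α = β} ≤ Cardinal.lift.{1} β.card

/-- `P_κ(λ)`, coded as the small subsets of `Iio λ.ord`. -/
def smallSet (κ lam : Cardinal.{0}) : Set (Set Ordinal.{0}) :=
  {a | a ⊆ Iio lam.ord ∧ #a < Cardinal.lift.{1} κ}

/-- The ideal `I_{κ,λ}` of noncofinal subsets of `P_κ(λ)`. -/
def Ikl (κ lam : Cardinal.{0}) : Set (Set (Set Ordinal.{0})) :=
  {A | A ⊆ smallSet κ lam ∧ ∃ a ∈ smallSet κ lam, ∀ b ∈ A, ¬ a ⊆ b}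

/-- A (`κ`-complete fine) ideal on `P_κ(λ)`. -/
structure IdealP (κ lam : Cardinal.{0}) where
  mem : Set (Set (Set Ordinal.{0}))
  subset_pk : ∀ A ∈ mem, A ⊆ smallSet κ lam
  fine : Ikl κ lam ⊆ mem
  subset_mem : ∀ A ∈ mem, ∀ B ⊆ A, B ∈ mem
  sUnion_mem : ∀ X : Set (Set (Set Ordinal.{0})), X ⊆ mem →
    #X < Cardinal.lift.{1} κ → ⋃₀ X ∈ mem
  ne_top : smallSet κ lam ∉ mem

/-- `H⁺` computed from the underlying collection `Hm` of an ideal on `P_κ(λ)`. -/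
def plusOf (κ lam : Cardinal.{0}) (Hm : Set (Set (Set Ordinal.{0}))) :
    Set (Set (Set Ordinal.{0})) :=
  {A | A ⊆ smallSet κ lam ∧ A ∉ Hm}

/-- `H⁺`. -/
def IdealP.plus {κ lam : Cardinal.{0}} (H : IdealP κ lam) : Set (Set (Set Ordinal.{0})) :=
  plusOf κ lam H.mem

/-- `cof(H)`. -/
def IdealP.cof {κ lam : Cardinal.{0}} (H : IdealP κ lam) : Cardinal.{0} :=
  leastCard fun X : Set (Set (Set Ordinal.{0})) =>
    X ⊆ H.mem ∧ ∀ A, A ∈ H.mem ↔ ∃ B ∈ X, A ⊆ B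

/-- `cof̄(H)`. -/
def IdealP.cofBar {κ lam : Cardinal.{0}} (H : IdealP κ lam) : Cardinal.{0} :=
  leastCard fun X : Set (Set (Set Ordinal.{0})) =>
    X ⊆ H.mem ∧ ∀ A ∈ H.mem, ∃ x ⊆ X, #x < Cardinal.lift.{1} κ ∧ A ⊆ ⋃₀ x

/-- `d^κ_{κ,λ}`. -/
def domP (κ lam : Cardinal.{0}) : Cardinal.{0} :=
  leastCard fun F : Set (Ordinal.{0} → Set Ordinal.{0}) =>
    (∀ f ∈ F, ∀ α < κ.ord, f α ∈ smallSet κ lam) ∧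
    ∀ g : Ordinal.{0} → Set Ordinal.{0}, (∀ α < κ.ord, g α ∈ smallSet κ lam) →
      ∃ f ∈ F, ∀ α < κ.ord, g α ⊆ f α

/-- A maximal almost disjoint family of size `≥ κ` for `H` (a member of `M_H^{≥κ}`). -/
def IsMad {κ lam : Cardinal.{0}} (H : IdealP κ lam) (Q : Set (Set (Set Ordinal.{0}))) : Prop :=
  Q ⊆ H.plus ∧ Cardinal.lift.{1} κ ≤ #Q ∧
  (∀ A ∈ Q, ∀ B ∈ Q, A ≠ B → A ∩ B ∈ H.mem) ∧
  ∀ C ∈ H.plus, ∃ A ∈ Q, A ∩ C ∈ H.plus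

/-- The (small) cardinal `c` with `lift c = c'`, used to pull `λ^{<κ} = |P_κ(λ)|` down. -/
def downCard (c : Cardinal.{1}) : Cardinal.{0} :=
  sInf {d : Cardinal.{0} | Cardinal.lift.{1} d = c}

open Classical in
/-- The number `a_H`. -/
def aNum {κ lam : Cardinal.{0}} (H : IdealP κ lam) : Cardinal.{0} :=
  if ∃ Q, IsMad H Q then sInf {c | ∃ Q, IsMad H Q ∧ Cardinal.lift.{1} c = #Q}
  else 2 ^ Order.succ (downCard #(smallSet κ lam))

/-- Weak `π`-point. -/
def WeakPiPoint {κ lam : Cardinal.{0}} (H : IdealP κ lam) : Prop :=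
  ∀ f : Ordinal.{0} → Set (Set Ordinal.{0}), (∀ α < κ.ord, f α ∈ H.mem) →
    ∀ A ∈ H.plus, ∃ B ∈ H.plus, B ⊆ A ∧ ∀ α < κ.ord, B ∩ f α ∈ Ikl κ lam

/-- `∪(a ∩ κ)`. -/
def supK (κ : Cardinal.{0}) (a : Set Ordinal.{0}) : Ordinal.{0} :=
  sSup (a ∩ Iio κ.ord)

/-- The relation `a ≺ b`. -/
def prec (κ : Cardinal.{0}) (a b : Set Ordinal.{0}) : Prop :=
  a ⊆ b ∧ supK κ a < supK κ b

/-- `[A]_κ²`. -/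
def pairsK (κ : Cardinal.{0}) (A : Set (Set Ordinal.{0})) : Set (Ordinal.{0} × Set Ordinal.{0}) :=
  {p | ∃ a ∈ A, ∃ b ∈ A, supK κ a < supK κ b ∧ p = (supK κ a, b)}

/-- `[A]_≺²`. -/
def pairsPrec (κ : Cardinal.{0}) (A : Set (Set Ordinal.{0})) :
    Set (Ordinal.{0} × Set Ordinal.{0}) :=
  {p | ∃ a ∈ A, ∃ b ∈ A, prec κ a b ∧ p = (supK κ a, b)}

/-- `[A]_{κ,κ}²`. -/
def pairsKK (κ : Cardinal.{0}) (A : Set (Set Ordinal.{0})) : Set (Ordinal.{0} × Ordinal.{0}) :=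
  {p | ∃ a ∈ A, ∃ b ∈ A, supK κ a < supK κ b ∧ p = (supK κ a, supK κ b)}

/-- `S` is a set of ordinals of order type `α`. -/
def OrdType (S : Set Ordinal.{0}) (α : Ordinal.{0}) : Prop :=
  ∃ e : Ordinal.{0} → Ordinal.{0},
    (∀ i < α, ∀ j < α, i < j → e i < e j) ∧ e '' Iio α = S

/-- `(B, ≺)` has order type `α`. -/
def OrdTypePrec (κ : Cardinal.{0}) (B : Set (Set Ordinal.{0})) (α : Ordinal.{0}) : Prop :=
  ∃ e : Ordinal.{0} → Set Ordinal.{0},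
    (∀ i < α, ∀ j < α, i < j → prec κ (e i) (e j)) ∧ e '' Iio α = B

/-- The partition relation `κ → (κ, θ)²`. -/
def ArrowKTheta (κ : Cardinal.{0}) (θ : Ordinal.{0}) : Prop :=
  ∀ f : Ordinal.{0} → Ordinal.{0} → Fin 2, ∃ A ⊆ Iio κ.ord,
    (OrdType A κ.ord ∧ ∀ α ∈ A, ∀ β ∈ A, α < β → f α β = 0) ∨
    (OrdType A θ ∧ ∀ α ∈ A, ∀ β ∈ A, α < β → f α β = 1)

/-- `κ` is weakly compact. -/
def WeaklyCompact (κ : Cardinal.{0}) : Prop :=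
  ∀ f : Ordinal.{0} → Ordinal.{0} → Fin 2, ∃ A ⊆ Iio κ.ord,
    OrdType A κ.ord ∧ ∃ i, ∀ α ∈ A, ∀ β ∈ A, α < β → f α β = i

/-- The partition relation `J⁺ → (J⁺, α)²` for an ideal on `κ`. -/
def ArrowJ {κ : Cardinal.{0}} (J : IdealK κ) (α : Ordinal.{0}) : Prop :=
  ∀ A ∈ J.plus, ∀ f : Ordinal.{0} → Ordinal.{0} → Fin 2,
    ∃ B ⊆ A, (B ∈ J.plus ∧ ∀ β ∈ B, ∀ γ ∈ B, β < γ → f β γ = 0) ∨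
             (OrdType B α ∧ ∀ β ∈ B, ∀ γ ∈ B, β < γ → f β γ = 1)

/-- The square bracket relation `J⁺ → [J⁺]_ρ²` for an ideal on `κ`. -/
def SqBrJ {κ : Cardinal.{0}} (J : IdealK κ) (ρ : Cardinal.{0}) : Prop :=
  ∀ A ∈ J.plus, ∀ f : Ordinal.{0} → Ordinal.{0} → Ordinal.{0},
    (∀ β ∈ A, ∀ γ ∈ A, β < γ → f β γ < ρ.ord) →
    ∃ B ∈ J.plus, B ⊆ A ∧ {ξ | ∃ β ∈ B, ∃ γ ∈ B, β < γ ∧ f β γ = ξ} ≠ Iio ρ.ord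

/-- `H⁺ →_κ (H⁺, α)²`. -/
def ArrowP (κ lam : Cardinal.{0}) (Hm : Set (Set (Set Ordinal.{0}))) (α : Ordinal.{0}) : Prop :=
  ∀ F : Ordinal.{0} → Set Ordinal.{0} → Fin 2, ∀ A ∈ plusOf κ lam Hm,
    ∃ B ⊆ A, (B ∈ plusOf κ lam Hm ∧ ∀ p ∈ pairsK κ B, F p.1 p.2 = 0) ∨
             (OrdTypePrec κ B α ∧ ∀ p ∈ pairsK κ B, F p.1 p.2 = 1)

/-- `H⁺ →_{κ,κ} (H⁺, α)²`. -/
def ArrowPKK (κ lam : Cardinal.{0}) (Hm : Set (Set (Set Ordinal.{0}))) (α : Ordinal.{0}) : Prop :=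
  ∀ F : Ordinal.{0} → Ordinal.{0} → Fin 2, ∀ A ∈ plusOf κ lam Hm,
    ∃ B ⊆ A, (B ∈ plusOf κ lam Hm ∧ ∀ p ∈ pairsKK κ B, F p.1 p.2 = 0) ∨
             (OrdTypePrec κ B α ∧ ∀ p ∈ pairsKK κ B, F p.1 p.2 = 1)

/-- `H⁺ →_{κ,κ} (H⁺; α)²`. -/
def ArrowPKKsemi (κ lam : Cardinal.{0}) (Hm : Set (Set (Set Ordinal.{0}))) (α : Ordinal.{0}) :
    Prop :=
  ∀ F : Ordinal.{0} → Ordinal.{0} → Fin 2, ∀ A ∈ plusOf κ lam Hm,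
    ∃ B ⊆ A, (B ∈ plusOf κ lam Hm ∧ ∀ p ∈ pairsKK κ B, F p.1 p.2 = 0) ∨
             (OrdType {o | ∃ a ∈ B, supK κ a = o} α ∧ ∀ p ∈ pairsKK κ B, F p.1 p.2 = 1)

/-- `H⁺ →_κ (H⁺)²`. -/
def ArrowPConst (κ lam : Cardinal.{0}) (Hm : Set (Set (Set Ordinal.{0}))) : Prop :=
  ∀ F : Ordinal.{0} → Set Ordinal.{0} → Fin 2, ∀ A ∈ plusOf κ lam Hm,
    ∃ B ∈ plusOf κ lam Hm, B ⊆ A ∧ ∃ i, ∀ p ∈ pairsK κ B, F p.1 p.2 = i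

/-- `H⁺ →_{κ,κ} [H⁺]_ρ²`. -/
def SqBrPKK (κ lam : Cardinal.{0}) (Hm : Set (Set (Set Ordinal.{0}))) (ρ : Cardinal.{0}) : Prop :=
  ∀ F : Ordinal.{0} → Ordinal.{0} → Ordinal.{0},
    (∀ α β : Ordinal.{0}, α < β → β < κ.ord → F α β < ρ.ord) →
    ∀ A ∈ plusOf κ lam Hm, ∃ B ∈ plusOf κ lam Hm, B ⊆ A ∧
      {ξ | ∃ p ∈ pairsKK κ B, F p.1 p.2 = ξ} ≠ Iio ρ.ord

/-- The class `K(κ,λ)`. -/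
def Kset (κ lam : Cardinal.{0}) : Set Cardinal.{0} :=
  {σ | lam ≤ σ ∧ ∃ T ⊆ smallSet κ lam, Cardinal.lift.{1} σ = #T ∧
    ∀ a ∈ smallSet κ lam, #{t ∈ T | t ⊆ a} < Cardinal.lift.{1} κ}

end

end PaperFormal

namespace PaperFormal

/-! ### Basic cardinality lemmas -/

theorem bdd_of_small {κ : Cardinal.{0}} (hreg : κ.IsRegular) {ι : Type 1}
    (hι : #ι < Cardinal.lift.{1} κ) (f : ι → Ordinal.{0}) (hf : ∀ i, f i < κ.ord) :
    ∃ δ < κ.ord, ∀ i, f i < δ := by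
  obtain ⟨c, hc, hce⟩ := Cardinal.lt_lift_iff.1 hι
  rw [← Cardinal.mk_out c, ← Cardinal.mk_uLift] at hce
  obtain ⟨e⟩ := Cardinal.eq.1 hce
  have hlim := Cardinal.isSuccLimit_ord hreg.aleph0_le
  refine ⟨⨆ i : c.out, Order.succ (f (e ⟨i⟩)), ?_, ?_⟩
  · apply Ordinal.iSup_lt_of_lt_cof
    · rw [Cardinal.mk_out, hreg.cof_ord]; exact hc
    · intro i
      exact hlim.succ_lt (hf _)
  · intro i
    have h := Ordinal.le_iSup (fun i : c.out => Order.succ (f (e ⟨i⟩))) (e.symm i).down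
    have h2 : e ⟨(e.symm i).down⟩ = i := e.apply_symm_apply i
    simp only [h2] at h
    exact lt_of_lt_of_le (Order.lt_succ _) h

theorem mk_Iio_lt_lift {κ : Cardinal.{0}} {δ : Ordinal.{0}} (h : δ < κ.ord) :
    #(Iio δ) < Cardinal.lift.{1} κ := by
  rw [Cardinal.mk_Iio_ordinal, Cardinal.lift_lt]
  exact Cardinal.lt_ord.1 h

theorem mk_Iio_ord (κ : Cardinal.{0}) : #(Iio κ.ord) = Cardinal.lift.{1} κ := by
  rw [Cardinal.mk_Iio_ordinal, Cardinal.card_ord]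

theorem mk_lt_of_bdd {κ : Cardinal.{0}} {δ : Ordinal.{0}} (h : δ < κ.ord) {s : Set Ordinal.{0}}
    (hs : s ⊆ Iio δ) : #s < Cardinal.lift.{1} κ :=
  lt_of_le_of_lt (Cardinal.mk_le_mk_of_subset hs) (mk_Iio_lt_lift h)

theorem small_bdd {κ : Cardinal.{0}} (hreg : κ.IsRegular) {a : Set Ordinal.{0}}
    (ha : #a < Cardinal.lift.{1} κ) (hs : a ⊆ Iio κ.ord) : ∃ δ < κ.ord, ∀ x ∈ a, x < δ := by
  obtain ⟨δ, h, h'⟩ := bdd_of_small hreg ha (fun i => i.1) (fun i => hs i.2)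
  exact ⟨δ, h, fun x hx => h' ⟨x, hx⟩⟩

theorem smallSet_bdd {κ lam : Cardinal.{0}} (hreg : κ.IsRegular) {a : Set Ordinal.{0}}
    (ha : a ∈ smallSet κ lam) : ∃ δ < κ.ord, ∀ x ∈ a, x < κ.ord → x < δ := by
  obtain ⟨δ, h, h'⟩ := small_bdd (a := a ∩ Iio κ.ord) hreg
    (lt_of_le_of_lt (Cardinal.mk_le_mk_of_subset inter_subset_left) ha.2) inter_subset_right
  exact ⟨δ, h, fun x hx hk => h' x ⟨hx, hk⟩⟩

theorem bddAbove_inter (κ : Cardinal.{0}) (a : Set Ordinal.{0}) : BddAbove (a ∩ Iio κ.ord) :=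
  ⟨κ.ord, fun _ hx => le_of_lt hx.2⟩

theorem le_supK {κ : Cardinal.{0}} {a : Set Ordinal.{0}} {x : Ordinal.{0}} (hx : x ∈ a)
    (hk : x < κ.ord) : x ≤ supK κ a :=
  le_csSup (bddAbove_inter κ a) ⟨hx, hk⟩

theorem supK_lt {κ lam : Cardinal.{0}} (hreg : κ.IsRegular) {a : Set Ordinal.{0}}
    (ha : a ∈ smallSet κ lam) : supK κ a < κ.ord := by
  obtain ⟨δ, h, h'⟩ := smallSet_bdd hreg ha
  refine lt_of_le_of_lt ?_ h
  rcases (a ∩ Iio κ.ord).eq_empty_or_nonempty with he | hne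
  · simp [supK, he]
  · exact csSup_le hne fun x hx => (h' x hx.1 hx.2).le

theorem supK_insert {κ : Cardinal.{0}} {a : Set Ordinal.{0}} {c : Ordinal.{0}} (hc : c < κ.ord)
    (ha : ∀ x ∈ a, x < κ.ord → x < c) : supK κ (insert c a) = c := by
  apply le_antisymm
  · refine csSup_le ⟨c, mem_insert _ _, hc⟩ ?_
    rintro x ⟨hx | hx, hk⟩
    · exact hx.le
    · exact (ha x hx hk).le
  · exact le_supK (mem_insert _ _) hc

theorem aleph0_le_lift {κ : Cardinal.{0}} (hreg : κ.IsRegular) : ℵ₀ ≤ Cardinal.lift.{1} κ := by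
  simpa using hreg.aleph0_le

theorem insert_small {κ lam : Cardinal.{0}} (hreg : κ.IsRegular) {a : Set Ordinal.{0}}
    {c : Ordinal.{0}} (ha : a ∈ smallSet κ lam) (hc : c < lam.ord) :
    insert c a ∈ smallSet κ lam := by
  refine ⟨insert_subset hc ha.1, ?_⟩
  refine lt_of_le_of_lt (Cardinal.mk_insert_le) ?_
  exact Cardinal.add_lt_of_lt (aleph0_le_lift hreg) ha.2
    (lt_of_lt_of_le (by simp) (aleph0_le_lift hreg))

theorem union_small {κ lam : Cardinal.{0}} (hreg : κ.IsRegular) {ι : Type 1}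
    (hι : #ι < Cardinal.lift.{1} κ) (f : ι → Set Ordinal.{0}) (hf : ∀ i, f i ∈ smallSet κ lam) :
    (⋃ i, f i) ∈ smallSet κ lam := by
  refine ⟨iUnion_subset fun i => (hf i).1, ?_⟩
  exact (Cardinal.card_iUnion_lt_iff_forall_of_isRegular hreg.lift hι).2 fun i => (hf i).2

theorem mem_plus_iff {κ lam : Cardinal.{0}} {A : Set (Set Ordinal.{0})} :
    A ∈ plusOf κ lam (Ikl κ lam) ↔ A ⊆ smallSet κ lam ∧
      ∀ a ∈ smallSet κ lam, ∃ b ∈ A, a ⊆ b := by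
  constructor
  · rintro ⟨h, h'⟩
    refine ⟨h, fun a ha => ?_⟩
    by_contra hcon
    push Not at hcon
    exact h' ⟨h, a, ha, hcon⟩
  · rintro ⟨h, h'⟩
    refine ⟨h, ?_⟩
    rintro ⟨-, a, ha, hcon⟩
    obtain ⟨b, hb, hab⟩ := h' a ha
    exact hcon b hb hab

theorem empty_small {κ lam : Cardinal.{0}} (hreg : κ.IsRegular) : ∅ ∈ smallSet κ lam :=
  ⟨empty_subset _, lt_of_lt_of_le (by simp [Cardinal.aleph0_pos]) (aleph0_le_lift hreg)⟩

theorem ordType_of_unbounded {κ : Cardinal.{0}} (hreg : κ.IsRegular) {S : Set Ordinal.{0}}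
    (hS : S ⊆ Iio κ.ord) (hu : ∀ β < κ.ord, ∃ s ∈ S, β ≤ s) : OrdType S κ.ord := by
  set S' : Set Ordinal.{0} := S ∪ Ici κ.ord with hS'
  have hnb : ¬ BddAbove S' := by
    rintro ⟨b, hb⟩
    have := hb (show max κ.ord (Order.succ b) ∈ S' from Or.inr (mem_Ici.2 (le_max_left _ _)))
    exact absurd (lt_of_lt_of_le (Order.lt_succ b) (le_max_right _ _)) (not_lt.2 this)
  have hmono := Ordinal.enumOrd_strictMono hnb
  refine ⟨Ordinal.enumOrd S', fun i _ j _ hij => hmono hij, ?_⟩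
  apply subset_antisymm
  · rintro _ ⟨i, hi, rfl⟩
    have hmem : Ordinal.enumOrd S' i ∈ S' :=
      (Ordinal.range_enumOrd hnb).subset (mem_range_self _)
    rcases hmem with h | h
    · exact h
    · exfalso
      obtain ⟨δ, hδ, hb⟩ := bdd_of_small (ι := {j : Iio i // Ordinal.enumOrd S' j < κ.ord}) hreg
        (lt_of_le_of_lt (Cardinal.mk_subtype_le _) (mk_Iio_lt_lift hi))
        (fun j => Ordinal.enumOrd S' j.1) (fun j => j.2)
      obtain ⟨s, hs, hδs⟩ := hu δ hδ
      obtain ⟨j, rfl⟩ := Ordinal.enumOrd_surjective hnb (show s ∈ S' from Or.inl hs)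
      have hji : j < i := hmono.lt_iff_lt.1 (lt_of_lt_of_le (hS hs) h)
      exact absurd (hb ⟨⟨j, hji⟩, hS hs⟩) (not_lt.2 hδs)
  · intro s hs
    obtain ⟨j, rfl⟩ := Ordinal.enumOrd_surjective hnb (show s ∈ S' from Or.inl hs)
    exact ⟨j, lt_of_le_of_lt hmono.le_apply (hS hs), rfl⟩

theorem le_of_strict {α : Ordinal.{0}} {e : Ordinal.{0} → Ordinal.{0}}
    (he : ∀ i < α, ∀ j < α, i < j → e i < e j) : ∀ i < α, i ≤ e i := by
  intro i
  induction i using WellFoundedLT.induction with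
  | ind i ih =>
    intro hi
    by_contra hcon
    push Not at hcon
    have h1 := ih (e i) hcon (hcon.trans hi)
    exact absurd (he _ (hcon.trans hi) _ hi hcon) (not_lt.2 h1)

/-- Surjective coding with unbounded fibres. -/
theorem exists_dec {κ : Cardinal.{0}} (hreg : κ.IsRegular) {X : Type 1} (C : Set X)
    (hC : #C ≤ Cardinal.lift.{1} κ) (hne : C.Nonempty) :
    ∃ dec : Ordinal.{0} → X, (∀ c, dec c ∈ C) ∧
      ∀ z ∈ C, ∀ β < κ.ord, ∃ c < κ.ord, β < c ∧ dec c = z := by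
  have hle : #(C × Iio κ.ord) ≤ #(Iio κ.ord) := by
    rw [Cardinal.mk_prod, Cardinal.lift_id, Cardinal.lift_id, mk_Iio_ord]
    exact (mul_le_mul_left hC _).trans (Cardinal.mul_eq_self (aleph0_le_lift hreg)).le
  obtain ⟨z0, hz0⟩ := hne
  obtain ⟨f⟩ := hle
  have : Nonempty (C × Iio κ.ord) := ⟨⟨z0, hz0⟩, ⟨0, hreg.ord_pos⟩⟩
  set g := Function.invFun f with hg
  have hgs : Function.LeftInverse g f := Function.leftInverse_invFun f.injective
  classical
  refine ⟨fun c => if h : c < κ.ord then (g ⟨c, h⟩).1.1 else z0, ?_, ?_⟩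
  · intro c
    dsimp only
    split_ifs with h
    · exact (g ⟨c, h⟩).1.2
    · exact hz0
  · intro z hz β hβ
    by_contra hcon
    push Not at hcon
    have hsmall : #(Iic β) < Cardinal.lift.{1} κ := by
      rw [← Order.Iio_succ]
      exact mk_Iio_lt_lift ((Cardinal.isSuccLimit_ord hreg.aleph0_le).succ_lt hβ)
    obtain ⟨δ, hδ, hb⟩ := bdd_of_small hreg hsmall
      (fun c => if h : c.1 < κ.ord then (g ⟨c.1, h⟩).2.1 else 0) (by
        intro c
        split_ifs with h
        · exact (g ⟨c, h⟩).2.2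
        · exact hreg.ord_pos)
    have hc := hgs (⟨z, hz⟩, ⟨δ, hδ⟩)
    set c := f (⟨z, hz⟩, ⟨δ, hδ⟩) with hcdef
    have hcβ : c.1 ≤ β := by
      by_contra h
      refine hcon c.1 c.2 (not_le.1 h) ?_
      have : c.1 < κ.ord := c.2
      simp [this, hc]
    have := hb ⟨c.1, hcβ⟩
    have hlt : c.1 < κ.ord := c.2
    simp [hlt, hc] at this

end PaperFormal

namespace PaperFormal

/-! ### Weak compactness: strong limit and branches -/

theorem evConst {κ : Cardinal.{0}} (hreg : κ.IsRegular) {L : Type 1} [PartialOrder L]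
    (y : Ordinal.{0} → L)
    (hy : (∀ i < κ.ord, ∀ j < κ.ord, i ≤ j → y i ≤ y j) ∨
      (∀ i < κ.ord, ∀ j < κ.ord, i ≤ j → y j ≤ y i))
    (hs : #(y '' Iio κ.ord) < Cardinal.lift.{1} κ) :
    ∃ i0 < κ.ord, ∀ i < κ.ord, i0 ≤ i → y i = y i0 := by
  have key : ∃ v, ∀ β < κ.ord, ∃ i < κ.ord, β ≤ i ∧ y i = v := by
    by_contra hcon
    push Not at hcon
    choose b hb hb' using hcon
    obtain ⟨δ, hδ, h⟩ := bdd_of_small hreg hs (fun v => b v.1) (fun v => hb v.1)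
    have := h ⟨y δ, δ, hδ, rfl⟩
    exact hb' (y δ) δ hδ this.le rfl
  obtain ⟨v, hv⟩ := key
  obtain ⟨i0, hi0, -, rfl⟩ := hv 0 hreg.ord_pos
  refine ⟨i0, hi0, fun i hi hle => ?_⟩
  obtain ⟨j, hj, hij, hjv⟩ := hv i hi
  rcases hy with hy | hy
  · exact le_antisymm (hjv ▸ hy i hi j hj hij) (hy i0 hi0 i hi hle)
  · exact le_antisymm (hy i0 hi0 i hi hle) (hjv ▸ hy i hi j hj hij)

open Classical in
/-- Truncation of a `0,1`-sequence. -/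
noncomputable def trunc (γ : Ordinal.{0}) (s : Ordinal.{0} → Fin 2) : Ordinal.{0} → Fin 2 :=
  fun β => if β < γ then s β else 0

theorem trunc_apply {γ β : Ordinal.{0}} (s : Ordinal.{0} → Fin 2) (h : β < γ) :
    trunc γ s β = s β := by simp [trunc, h]

theorem trunc_mono (γ : Ordinal.{0}) {s t : Ordinal.{0} → Fin 2} (h : toLex s ≤ toLex t) :
    toLex (trunc γ s) ≤ toLex (trunc γ t) := by
  rcases h.eq_or_lt with h | h
  · rw [toLex_inj.1 h]
  · obtain ⟨i, hi, hlt⟩ := h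
    by_cases hiγ : i < γ
    · refine le_of_lt ⟨i, fun j hj => ?_, ?_⟩
      · have := hi j hj
        simp only [Pi.toLex_apply] at this ⊢
        simp [trunc, this]
      · simp only [Pi.toLex_apply] at hlt ⊢
        simpa [trunc, hiγ] using hlt
    · refine le_of_eq (congrArg toLex ?_)
      funext j
      by_cases hj : j < γ
      · have := hi j (lt_of_lt_of_le hj (not_lt.1 hiγ))
        simp only [Pi.toLex_apply] at this
        simp [trunc, hj, this]
      · simp [trunc, hj]

theorem mk_range_trunc (γ : Ordinal.{0}) :
    #(range (trunc γ)) ≤ Cardinal.lift.{1} (2 ^ γ.card) := by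
  have h : #(Iio γ → Fin 2) = Cardinal.lift.{1} (2 ^ γ.card) := by
    simp [Cardinal.mk_Iio_ordinal]
  rw [← h]
  refine ⟨⟨fun s i => s.1 i.1, ?_⟩⟩
  rintro ⟨_, s, rfl⟩ ⟨_, t, rfl⟩ hst
  apply Subtype.ext
  funext β
  by_cases hβ : β < γ
  · exact congrFun hst ⟨β, hβ⟩
  · simp [trunc, hβ]

theorem wc_mono {κ : Cardinal.{0}} (hwc : WeaklyCompact κ) (s : Ordinal.{0} → Ordinal.{0} → Fin 2) :
    ∃ e : Ordinal.{0} → Ordinal.{0}, (∀ i < κ.ord, ∀ j < κ.ord, i < j → e i < e j) ∧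
      (∀ i < κ.ord, e i < κ.ord) ∧
      ((∀ i < κ.ord, ∀ j < κ.ord, i ≤ j → toLex (s (e i)) ≤ toLex (s (e j))) ∨
      (∀ i < κ.ord, ∀ j < κ.ord, i ≤ j → toLex (s (e j)) ≤ toLex (s (e i)))) := by
  classical
  obtain ⟨A, hA, ⟨e, he, rfl⟩, i, hi⟩ :=
    hwc (fun α β => if toLex (s α) ≤ toLex (s β) then 0 else 1)
  refine ⟨e, he, fun i hi => hA ⟨i, hi, rfl⟩, ?_⟩
  by_cases h0 : i = 0
  · left
    intro a ha b hb hab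
    rcases hab.eq_or_lt with rfl | hab
    · exact le_rfl
    · have := hi _ ⟨a, ha, rfl⟩ _ ⟨b, hb, rfl⟩ (he a ha b hb hab)
      by_contra hcon
      simp [h0, hcon] at this
  · right
    intro a ha b hb hab
    rcases hab.eq_or_lt with rfl | hab
    · exact le_rfl
    · have := hi _ ⟨a, ha, rfl⟩ _ ⟨b, hb, rfl⟩ (he a ha b hb hab)
      by_contra hcon
      have h2 := (not_le.1 hcon).le
      simp only [h2, if_true] at this
      exact h0 this.symm

theorem trunc_evConst {κ : Cardinal.{0}} (hreg : κ.IsRegular)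
    {x : Ordinal.{0} → Ordinal.{0} → Fin 2}
    (hx : (∀ i < κ.ord, ∀ j < κ.ord, i ≤ j → toLex (x i) ≤ toLex (x j)) ∨
      (∀ i < κ.ord, ∀ j < κ.ord, i ≤ j → toLex (x j) ≤ toLex (x i)))
    {γ : Ordinal.{0}} (hγ : (2 : Cardinal.{0}) ^ γ.card < κ) :
    ∃ i0 < κ.ord, ∀ i < κ.ord, i0 ≤ i → trunc γ (x i) = trunc γ (x i0) := by
  obtain ⟨i0, h0, h⟩ := evConst hreg (fun i => toLex (trunc γ (x i)))
    (hx.imp (fun h i hi j hj hij => trunc_mono γ (h i hi j hj hij))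
      (fun h i hi j hj hij => trunc_mono γ (h i hi j hj hij))) (by
      refine lt_of_le_of_lt ?_ (Cardinal.lift_lt.2 hγ)
      refine le_trans ?_ (mk_range_trunc γ)
      refine Cardinal.mk_le_of_injective
        (f := fun z => (⟨ofLex z.1, by
          obtain ⟨_, i, -, rfl⟩ := z
          exact ⟨x i, rfl⟩⟩ : range (trunc γ))) ?_
      intro z w hzw
      exact Subtype.ext (ofLex_inj.1 (Subtype.mk.inj hzw)))
  exact ⟨i0, h0, fun i hi hle => toLex_inj.1 (h i hi hle)⟩

theorem wc_strongLimit {κ : Cardinal.{0}} (hreg : κ.IsRegular) (huc : ℵ₀ < κ)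
    (hwc : WeaklyCompact κ) : ∀ x < κ, (2 : Cardinal.{0}) ^ x < κ := by
  have hlim := Cardinal.isSuccLimit_ord hreg.aleph0_le
  intro x
  induction x using WellFoundedLT.induction with
  | ind x ih =>
    intro hx
    by_cases hfin : x < ℵ₀
    · exact (Cardinal.power_lt_aleph0 (Cardinal.natCast_lt_aleph0 (n := 2)) hfin).trans huc
    have hxlim := Cardinal.isSuccLimit_ord (not_lt.1 hfin)
    by_contra hcon
    have hle : #(Iio κ.ord) ≤ #(Iio x.ord → Fin 2) := by
      have := Cardinal.lift_le.{1}.2 (not_lt.1 hcon)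
      simpa [mk_Iio_ord] using this
    obtain ⟨f⟩ := hle
    classical
    set s : Ordinal.{0} → Ordinal.{0} → Fin 2 := fun i β =>
      if h : i < κ.ord ∧ β < x.ord then f ⟨i, h.1⟩ ⟨β, h.2⟩ else 0 with hs
    obtain ⟨e, he, hek, hmono⟩ := wc_mono hwc s
    have hev : ∀ δ : Iio x.ord, ∃ i0 < κ.ord, ∀ i < κ.ord, i0 ≤ i →
        trunc δ (s (e i)) = trunc δ (s (e i0)) := by
      rintro ⟨δ, hδ⟩
      have hδx : δ.card < x := Cardinal.lt_ord.1 hδ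
      exact trunc_evConst (x := fun i => s (e i)) hreg hmono (ih _ hδx (hδx.trans hx))
    choose i0 hi0 hi0' using hev
    obtain ⟨I, hI, hIb⟩ := bdd_of_small hreg
      (mk_Iio_lt_lift (κ := κ) (δ := x.ord) (Cardinal.ord_lt_ord.2 hx)) i0 hi0
    have hI' := hlim.succ_lt hI
    have heq : f ⟨e I, hek I hI⟩ = f ⟨e (Order.succ I), hek _ hI'⟩ := by
      funext β
      have hβ : (β : Ordinal.{0}) < x.ord := β.2
      set δ : Iio x.ord := ⟨Order.succ β.1, hxlim.succ_lt hβ⟩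
      have h1 := hi0' δ I hI (hIb δ).le
      have h2 := hi0' δ _ hI' ((hIb δ).le.trans (Order.le_succ I))
      have h3 := congrFun (h1.trans h2.symm) β.1
      rw [trunc_apply _ (Order.lt_succ _), trunc_apply _ (Order.lt_succ _)] at h3
      simp only [hs] at h3
      rwa [dif_pos ⟨hek I hI, hβ⟩, dif_pos ⟨hek _ hI', hβ⟩] at h3
    have := congrArg Subtype.val (f.injective heq)
    exact absurd this (ne_of_lt (he I hI _ hI' (Order.lt_succ I)))

/-- Branch lemma. -/
theorem wc_branch {κ : Cardinal.{0}} (hreg : κ.IsRegular) (huc : ℵ₀ < κ)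
    (hwc : WeaklyCompact κ) (Pos : Ordinal.{0} → (Ordinal.{0} → Fin 2) → Prop)
    (hex : ∀ γ < κ.ord, ∃ s, Pos γ s)
    (hdown : ∀ γ δ s t, γ ≤ δ → (∀ β < γ, s β = t β) → Pos δ s → Pos γ t) :
    ∃ φ, ∀ γ < κ.ord, Pos γ φ := by
  have hlim := Cardinal.isSuccLimit_ord hreg.aleph0_le
  have hsl := wc_strongLimit hreg huc hwc
  have hex' : ∀ γ, ∃ s, γ < κ.ord → Pos γ s := by
    intro γ
    by_cases h : γ < κ.ord
    · obtain ⟨s, hs⟩ := hex γ h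
      exact ⟨s, fun _ => hs⟩
    · exact ⟨fun _ => 0, fun h' => absurd h' h⟩
  choose s hs using hex'
  obtain ⟨e, he, hek, hmono⟩ := wc_mono hwc s
  have hev : ∀ δ : Ordinal.{0}, ∃ i0, δ < κ.ord → i0 < κ.ord ∧ ∀ i < κ.ord, i0 ≤ i →
      trunc δ (s (e i)) = trunc δ (s (e i0)) := by
    intro δ
    by_cases hδ : δ < κ.ord
    · obtain ⟨i0, h, h'⟩ := trunc_evConst (x := fun i => s (e i)) hreg hmono
        (hsl _ (Cardinal.lt_ord.1 hδ))
      exact ⟨i0, fun _ => ⟨h, h'⟩⟩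
    · exact ⟨0, fun h => absurd h hδ⟩
  choose i0 hi0 using hev
  refine ⟨fun β => s (e (i0 (Order.succ β))) β, fun γ hγ => ?_⟩
  set i := max γ (i0 γ) with hi
  have hik : i < κ.ord := max_lt hγ (hi0 γ hγ).1
  refine hdown γ (e i) (s (e i)) _ ((le_max_left _ _).trans (le_of_strict he i hik)) ?_
    (hs _ (hek i hik))
  intro β hβ
  have hβ' := hlim.succ_lt (hβ.trans hγ)
  set j := max i (i0 (Order.succ β)) with hj
  have hjk : j < κ.ord := max_lt hik (hi0 _ hβ').1
  have h1 := congrFun ((hi0 γ hγ).2 i hik (le_max_right _ _)) β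
  have h2 := congrFun ((hi0 γ hγ).2 j hjk ((le_max_right _ _).trans (le_max_left _ _))) β
  have h3 := congrFun ((hi0 _ hβ').2 j hjk (le_max_right _ _)) β
  rw [trunc_apply _ hβ, trunc_apply _ hβ] at h1 h2
  rw [trunc_apply _ (Order.lt_succ β), trunc_apply _ (Order.lt_succ β)] at h3
  rw [h1, ← h2, h3]

end PaperFormal

namespace PaperFormal

/-! ### From (i) to (ii) -/

theorem cov_apply {κ lam : Cardinal.{0}} (hreg : κ.IsRegular)
    (hcov : #(smallSet κ lam) < Cardinal.lift.{1} (covM κ κ))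
    (D : Set Ordinal.{0} → Set (Set Ordinal.{0})) (hD : ∀ e ∈ smallSet κ lam, DenseOpen κ κ (D e)) :
    ∃ x ∈ cantor κ, ∀ e ∈ smallSet κ lam, x ∈ D e := by
  by_contra hcon
  push Not at hcon
  set Y : Set (Set (Set Ordinal.{0})) := (fun e => cantor κ \ D e) '' smallSet κ lam with hY
  have hYle : #Y ≤ #(smallSet κ lam) := Cardinal.mk_image_le
  obtain ⟨c, hc⟩ := Cardinal.mem_range_lift_of_le (hYle.trans hcov.le)
  have hle : covM κ κ ≤ c := by
    apply csInf_le'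
    refine ⟨Y, ⟨?_, ?_⟩, hc⟩
    · rintro _ ⟨e, he, rfl⟩
      refine ⟨sdiff_subset, {D e}, singleton_nonempty _, ?_, ?_, ?_⟩
      · rw [Cardinal.mk_singleton]
        exact Cardinal.one_le_aleph0.trans (aleph0_le_lift hreg)
      · rintro _ rfl
        exact hD e he
      · rw [sInter_singleton]
        exact sdiff_inter_self
    · apply subset_antisymm
      · rintro x ⟨_, ⟨e, he, rfl⟩, hx⟩
        exact hx.1
      · intro x hx
        obtain ⟨e, he, hxe⟩ := hcon x hx
        exact ⟨_, ⟨e, he, rfl⟩, hx, hxe⟩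
  have h1 := Cardinal.lift_le.{1}.2 hle
  rw [hc] at h1
  exact absurd (h1.trans hYle) (not_le.2 hcov)

theorem ord_lt_of_lt {κ lam : Cardinal.{0}} (hlt : κ < lam) {x : Ordinal.{0}} (h : x < κ.ord) :
    x < lam.ord := h.trans (Cardinal.ord_lt_ord.2 hlt)

theorem i_imp_ii {κ lam : Cardinal.{0}} (hreg : κ.IsRegular) (huc : ℵ₀ < κ) (hlt : κ < lam)
    (hwc : WeaklyCompact κ) (hcov : #(smallSet κ lam) < Cardinal.lift.{1} (covM κ κ)) :
    ArrowPConst κ lam (Ikl κ lam) := by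
  classical
  intro F A hA
  obtain ⟨hAs, hA⟩ := mem_plus_iff.1 hA
  have hsl := wc_strongLimit hreg huc hwc
  -- the branch
  obtain ⟨φ, hφ⟩ := wc_branch hreg huc hwc
    (fun γ s => ∀ e ∈ smallSet κ lam, ∃ b ∈ A, e ⊆ b ∧ ∀ β < γ, F β b = s β) (by
      intro γ hγ
      by_contra hcon
      push Not at hcon
      choose E hE hE' using hcon
      have hsm : #(range (trunc γ)) < Cardinal.lift.{1} κ :=
        lt_of_le_of_lt (mk_range_trunc γ) (Cardinal.lift_lt.2 (hsl _ (Cardinal.lt_ord.1 hγ)))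
      obtain ⟨b, hb, hsub⟩ := hA _ (union_small hreg hsm (fun s => E s.1) (fun s => hE s.1))
      set s := trunc γ (fun β => F β b) with hs
      obtain ⟨β, hβ, hne⟩ := hE' s b hb
        ((subset_iUnion (fun s : range (trunc γ) => E s.1) ⟨s, _, rfl⟩).trans hsub)
      exact hne (trunc_apply (fun β => F β b) hβ).symm) (by
      intro γ δ s t hle hst h e he
      obtain ⟨b, hb, heb, hF⟩ := h e he
      exact ⟨b, hb, heb, fun β hβ => (hF β (hβ.trans_le hle)).trans (hst β hβ)⟩)
  -- the colour
  have hcol : ∃ i : Fin 2, ∀ γ < κ.ord, ∀ e ∈ smallSet κ lam, ∃ b ∈ A, e ⊆ b ∧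
      (∀ β < γ, F β b = φ β) ∧ φ (supK κ b) = i := by
    by_contra hcon
    push Not at hcon
    obtain ⟨γ0, hγ0, e0, he0, h0⟩ := hcon 0
    obtain ⟨γ1, hγ1, e1, he1, h1⟩ := hcon 1
    have hu : e0 ∪ e1 ∈ smallSet κ lam := by
      refine ⟨union_subset he0.1 he1.1, lt_of_le_of_lt (Cardinal.mk_union_le _ _) ?_⟩
      exact Cardinal.add_lt_of_lt (aleph0_le_lift hreg) he0.2 he1.2
    obtain ⟨b, hb, hsub, hF⟩ := hφ (max γ0 γ1) (max_lt hγ0 hγ1) _ hu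
    have h0' := h0 b hb (subset_union_left.trans hsub)
      (fun β hβ => hF β (hβ.trans_le (le_max_left _ _)))
    have h1' := h1 b hb (subset_union_right.trans hsub)
      (fun β hβ => hF β (hβ.trans_le (le_max_right _ _)))
    generalize φ (supK κ b) = v at h0' h1'
    fin_cases v <;> simp_all
  obtain ⟨i, hi⟩ := hcol
  -- coding of pairs
  obtain ⟨dec, hdec, hdec'⟩ := exists_dec hreg (X := Ordinal.{0} × Ordinal.{0})
    (Iio κ.ord ×ˢ Iio κ.ord) (by
      rw [Cardinal.mk_setProd, mk_Iio_ord]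
      exact (Cardinal.mul_eq_self (aleph0_le_lift hreg)).le)
    ⟨(0, 0), hreg.ord_pos, hreg.ord_pos⟩
  set Ty : Ordinal.{0} → Set Ordinal.{0} → Prop := fun c b =>
    supK κ b = (dec c).2 ∧ (dec c).1 ≤ (dec c).2 ∧ (∀ β < (dec c).1, F β b = φ β) ∧
      φ (supK κ b) = i with hTy
  set Sel : Set Ordinal.{0} → Ordinal.{0} → Prop := fun x c =>
    c < κ.ord ∧ c ∈ x ∧ ∀ c' ∈ x, c' < c → (dec c').2 < (dec c).1 with hSel
  have hlim := Cardinal.isSuccLimit_ord hreg.aleph0_le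
  obtain ⟨x, hx, hxD⟩ := cov_apply hreg hcov
    (fun e => {x | x ∈ cantor κ ∧ ∃ c, Sel x c ∧ ∃ b ∈ A, e ⊆ b ∧ Ty c b}) (by
      intro e he
      refine ⟨fun x hx => hx.1, ?_, ?_⟩
      · rintro x ⟨hx, c, hc, b, hb⟩
        refine ⟨Iio (Order.succ c), x ∩ Iio (Order.succ c), ⟨?_, inter_subset_right, ?_⟩,
          ⟨hx, rfl⟩, ?_⟩
        · exact Iio_subset_Iio (hlim.succ_lt hc.1).le
        · exact mk_Iio_lt_lift (hlim.succ_lt hc.1)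
        · rintro y ⟨hy, hyx⟩
          refine ⟨hy, c, ⟨hc.1, ?_, ?_⟩, b, hb⟩
          · have : c ∈ x ∩ Iio (Order.succ c) := ⟨hc.2.1, Order.lt_succ c⟩
            rw [← hyx] at this
            exact this.1
          · intro c' hc' hlt'
            have : c' ∈ y ∩ Iio (Order.succ c) := ⟨hc', hlt'.trans (Order.lt_succ c)⟩
            rw [hyx] at this
            exact hc.2.2 c' this.1 hlt'
      · rintro a t ⟨ha, hta, hsm⟩
        obtain ⟨δ, hδ, hδb⟩ := small_bdd hreg hsm ha
        obtain ⟨ξ, hξ, hξb⟩ := bdd_of_small hreg (mk_Iio_lt_lift hδ) (fun c => (dec c.1).2)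
          (fun c => (hdec c.1).2)
        obtain ⟨b, hb, hsub, hF, hcolb⟩ := hi ξ hξ _ (insert_small hreg he (ord_lt_of_lt hlt hξ))
        have hξs : ξ ≤ supK κ b := le_supK (hsub (mem_insert _ _)) hξ
        obtain ⟨c, hc, hδc, hcd⟩ := hdec' (ξ, supK κ b) ⟨hξ, supK_lt hreg (hAs hb)⟩ δ hδ
        have hsubk : insert c t ⊆ Iio κ.ord := insert_subset hc (hta.trans ha)
        refine ⟨insert c t, ⟨hsubk, ?_⟩, hsubk, c, ⟨hc, mem_insert _ _, ?_⟩, b, hb,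
          (subset_insert _ _).trans hsub, ?_⟩
        · rw [insert_inter_of_notMem, inter_eq_left.2 hta]
          intro hca
          exact absurd (hδb c hca) (not_lt.2 hδc.le)
        · rintro c' (rfl | hc') hlt'
          · exact absurd hlt' (lt_irrefl _)
          · rw [hcd]
            exact hξb ⟨c', hδb c' (hta hc')⟩
        · simp only [hTy, hcd]
          exact ⟨trivial, hξs, hF, hcolb⟩)
  refine ⟨{b ∈ A | ∃ c, Sel x c ∧ Ty c b}, ?_, fun b hb => hb.1, i, ?_⟩
  · rw [mem_plus_iff]
    refine ⟨fun b hb => hAs hb.1, fun e he => ?_⟩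
    obtain ⟨-, c, hc, b, hb, heb, hT⟩ := hxD e he
    exact ⟨b, ⟨hb, c, hc, hT⟩, heb⟩
  · rintro _ ⟨a, ⟨ha, c, hc, hTa⟩, b, ⟨hb, c', hc', hTb⟩, hlt', rfl⟩
    dsimp only
    have hcc : c < c' := by
      rcases lt_trichotomy c c' with h | h | h
      · exact h
      · subst h
        rw [hTa.1, hTb.1] at hlt'
        exact absurd hlt' (lt_irrefl _)
      · have h1 := hc.2.2 c' hc'.2.1 h
        have h2 := h1.trans_le hTa.2.1
        rw [← hTa.1, ← hTb.1] at h2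
        exact absurd h2 hlt'.asymm
    have h1 := hc'.2.2 c hc.2.1 hcc
    rw [← hTa.1] at h1
    rw [hTb.2.2.1 _ h1, hTa.2.2.2]

/-! ### From (ii) to (iii) -/

theorem supK_image_ordType {κ lam : Cardinal.{0}} (hreg : κ.IsRegular) (hlt : κ < lam)
    {B : Set (Set Ordinal.{0})} (hB : B ∈ plusOf κ lam (Ikl κ lam)) :
    OrdType {o | ∃ a ∈ B, supK κ a = o} κ.ord := by
  obtain ⟨hs, hB⟩ := mem_plus_iff.1 hB
  refine ordType_of_unbounded hreg ?_ ?_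
  · rintro _ ⟨a, ha, rfl⟩
    exact supK_lt hreg (hs ha)
  · intro β hβ
    obtain ⟨b, hb, hsub⟩ := hB _ (insert_small hreg (empty_small hreg) (ord_lt_of_lt hlt hβ))
    exact ⟨_, ⟨b, hb, rfl⟩, le_supK (hsub (mem_insert _ _)) hβ⟩

theorem ii_imp_iii {κ lam : Cardinal.{0}} (hreg : κ.IsRegular) (hlt : κ < lam)
    (h : ArrowPConst κ lam (Ikl κ lam)) : ArrowPKKsemi κ lam (Ikl κ lam) κ.ord := by
  intro F A hA
  obtain ⟨B, hB, hBA, i, hi⟩ := h (fun α b => F α (supK κ b)) A hA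
  refine ⟨B, hBA, ?_⟩
  have hi' : ∀ p ∈ pairsKK κ B, F p.1 p.2 = i := by
    rintro _ ⟨a, ha, b, hb, hab, rfl⟩
    exact hi _ ⟨a, ha, b, hb, hab, rfl⟩
  by_cases h0 : i = 0
  · exact Or.inl ⟨hB, h0 ▸ hi'⟩
  · have h1 : i = 1 := by omega
    exact Or.inr ⟨supK_image_ordType hreg hlt hB, h1 ▸ hi'⟩

theorem iii_imp_wc {κ lam : Cardinal.{0}} (hreg : κ.IsRegular) (hlt : κ < lam)
    (h : ArrowPKKsemi κ lam (Ikl κ lam) κ.ord) : WeaklyCompact κ := by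
  intro f
  obtain ⟨B, hB, hor⟩ := h f (smallSet κ lam)
    (mem_plus_iff.2 ⟨subset_rfl, fun a ha => ⟨a, ha, subset_rfl⟩⟩)
  refine ⟨{o | ∃ a ∈ B, supK κ a = o}, ?_, ?_⟩
  · rintro _ ⟨a, ha, rfl⟩
    exact supK_lt hreg (hB ha)
  · rcases hor with ⟨hp, h0⟩ | ⟨ho, h1⟩
    · refine ⟨supK_image_ordType hreg hlt hp, 0, ?_⟩
      rintro _ ⟨a, ha, rfl⟩ _ ⟨b, hb, rfl⟩ hab
      exact h0 _ ⟨a, ha, b, hb, hab, rfl⟩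
    · refine ⟨ho, 1, ?_⟩
      rintro _ ⟨a, ha, rfl⟩ _ ⟨b, hb, rfl⟩ hab
      exact h1 _ ⟨a, ha, b, hb, hab, rfl⟩

end PaperFormal

namespace PaperFormal

/-! ### From (iii) to (i) -/

/-- `E` is a dense property: each bounded condition extends to one forcing `E`. -/
def DenseProp (κ : Cardinal.{0}) (E : Set Ordinal.{0} → Prop) : Prop :=
  ∀ δ < κ.ord, ∀ t ⊆ Iio δ, ∃ δ' < κ.ord, δ ≤ δ' ∧ ∃ t' ⊆ Iio δ', t' ∩ Iio δ = t ∧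
    ∀ x ∈ cantor κ, x ∩ Iio δ' = t' → E x

theorem DenseOpen.denseProp {κ : Cardinal.{0}} (hreg : κ.IsRegular) {D : Set (Set Ordinal.{0})}
    (hD : DenseOpen κ κ D) : DenseProp κ (fun x => x ∈ D) := by
  intro δ hδ t ht
  obtain ⟨x, ⟨hx, hxt⟩, hxD⟩ := hD.2.2 (Iio δ) t
    ⟨Iio_subset_Iio hδ.le, ht, mk_Iio_lt_lift hδ⟩
  obtain ⟨a, s, ⟨ha, hs, hsm⟩, ⟨-, hxs⟩, hsub⟩ := hD.2.1 x hxD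
  obtain ⟨δ1, hδ1, hb⟩ := small_bdd hreg hsm ha
  refine ⟨max δ δ1, max_lt hδ hδ1, le_max_left _ _, x ∩ Iio (max δ δ1), inter_subset_right, ?_, ?_⟩
  · rw [inter_assoc, Iio_inter_Iio, min_eq_right (le_max_left _ _), hxt]
  · intro y hy hyx
    apply hsub
    refine ⟨hy, ?_⟩
    rw [← hxs]
    have hsub' : a ⊆ Iio (max δ δ1) := fun z hz => (hb z hz).trans_le (le_max_right _ _)
    rw [← inter_eq_right.2 hsub', ← inter_assoc, ← inter_assoc, hyx]

/-- Extension of bounded conditions. -/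
def Ext (p q : Ordinal.{0} × Set Ordinal.{0}) : Prop := p.1 ≤ q.1 ∧ q.2 ∩ Iio p.1 = p.2

theorem Ext.trans {p q r : Ordinal.{0} × Set Ordinal.{0}} (h : Ext p q) (h' : Ext q r) :
    Ext p r := by
  refine ⟨h.1.trans h'.1, ?_⟩
  rw [← h.2, ← h'.2, inter_assoc, Iio_inter_Iio, min_eq_right h.1]

/-- Valid bounded conditions. -/
def Valid (κ : Cardinal.{0}) (p : Ordinal.{0} × Set Ordinal.{0}) : Prop :=
  p.1 < κ.ord ∧ p.2 ⊆ Iio p.1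

theorem denseProp_ord {κ : Cardinal.{0}} (hreg : κ.IsRegular) {θ : Ordinal.{0}} (hθ : θ < κ.ord)
    (E : Ordinal.{0} → Set Ordinal.{0} → Prop) (hE : ∀ j < θ, DenseProp κ (E j))
    (p0 : Ordinal.{0} × Set Ordinal.{0}) (hp0 : Valid κ p0) :
    ∃ q, Valid κ q ∧ Ext p0 q ∧ ∀ x ∈ cantor κ, x ∩ Iio q.1 = q.2 → ∀ j < θ, E j x := by
  have hstep : ∀ (j : Ordinal.{0}) (p : Ordinal.{0} × Set Ordinal.{0}),
      ∃ q : Ordinal.{0} × Set Ordinal.{0}, j < θ → Valid κ p →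
        (Valid κ q ∧ Ext p q ∧ ∀ x ∈ cantor κ, x ∩ Iio q.1 = q.2 → E j x) := by
    intro j p
    by_cases h : j < θ ∧ Valid κ p
    · obtain ⟨δ', h1, h2, t', h3, h4, h5⟩ := hE j h.1 p.1 h.2.1 p.2 h.2.2
      exact ⟨(δ', t'), fun _ _ => ⟨⟨h1, h3⟩, ⟨h2, h4⟩, h5⟩⟩
    · exact ⟨p, fun h1 h2 => absurd ⟨h1, h2⟩ h⟩
  choose step hstep using hstep
  let G : (j : Ordinal.{0}) → ((i : Ordinal.{0}) → i < j → Ordinal.{0} × Set Ordinal.{0}) →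
      Ordinal.{0} × Set Ordinal.{0} := fun j ih =>
    (max p0.1 (⨆ i : Iio j, (ih i.1 i.2).1), p0.2 ∪ ⋃ i : Iio j, (ih i.1 i.2).2)
  let r : Ordinal.{0} → Ordinal.{0} × Set Ordinal.{0} :=
    WellFoundedLT.fix (fun j ih => step j (G j ih))
  let base : Ordinal.{0} → Ordinal.{0} × Set Ordinal.{0} := fun j =>
    (max p0.1 (⨆ i : Iio j, (r i.1).1), p0.2 ∪ ⋃ i : Iio j, (r i.1).2)
  have hr : ∀ j, r j = step j (base j) := by
    intro j
    exact WellFoundedLT.fix_eq (fun j ih => step j (G j ih)) j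
  have hbase : ∀ j ≤ θ, (∀ i < j, Valid κ (r i) ∧ Ext p0 (r i) ∧ ∀ k < i, Ext (r k) (r i)) →
      Valid κ (base j) ∧ Ext p0 (base j) ∧ ∀ i < j, Ext (r i) (base j) := by
    intro j hj ih
    have hle : ∀ i < j, (r i).1 ≤ (base j).1 := fun i hi =>
      (Ordinal.le_iSup (fun i : Iio j => (r i.1).1) ⟨i, hi⟩).trans (le_max_right _ _)
    have hmem : ∀ z, z ∈ (base j).2 ↔ z ∈ p0.2 ∨ ∃ i < j, z ∈ (r i).2 := by
      intro z
      simp only [base, mem_union, mem_iUnion, Subtype.exists, mem_Iio, exists_prop]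
    refine ⟨⟨?_, ?_⟩, ⟨le_max_left _ _, ?_⟩, fun i hi => ⟨hle i hi, ?_⟩⟩
    · refine max_lt hp0.1 ?_
      obtain ⟨δ, hδ, hb⟩ := bdd_of_small hreg (mk_Iio_lt_lift (hj.trans_lt hθ))
        (fun i => (r i.1).1) (fun i => (ih i.1 i.2).1.1)
      exact lt_of_le_of_lt (Ordinal.iSup_le fun i => (hb i).le) hδ
    · intro z hz
      rcases (hmem z).1 hz with h | ⟨i, hi, h⟩
      · exact mem_Iio.2 (lt_of_lt_of_le (mem_Iio.1 (hp0.2 h)) (le_max_left _ _))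
      · exact mem_Iio.2 (lt_of_lt_of_le (mem_Iio.1 ((ih i hi).1.2 h)) (hle i hi))
    · ext z
      constructor
      · rintro ⟨hz, hz0⟩
        rcases (hmem z).1 hz with h | ⟨i, hi, h⟩
        · exact h
        · rw [← (ih i hi).2.1.2]
          exact ⟨h, hz0⟩
      · intro hz
        exact ⟨(hmem z).2 (Or.inl hz), hp0.2 hz⟩
    · ext z
      constructor
      · rintro ⟨hz, hzi⟩
        rcases (hmem z).1 hz with h | ⟨k, hk, h⟩
        · rw [← (ih i hi).2.1.2] at h
          exact h.1
        · rcases lt_trichotomy k i with hki | rfl | hki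
          · rw [← ((ih i hi).2.2 k hki).2] at h
            exact h.1
          · exact h
          · rw [← ((ih k hk).2.2 i hki).2]
            exact ⟨h, hzi⟩
      · intro hz
        exact ⟨(hmem z).2 (Or.inr ⟨i, hi, hz⟩), (ih i hi).1.2 hz⟩
  have hgood : ∀ j, j < θ → Valid κ (r j) ∧ Ext p0 (r j) ∧ ∀ k < j, Ext (r k) (r j) := by
    intro j
    induction j using WellFoundedLT.induction with
    | ind j ih =>
      intro hj
      obtain ⟨h1, h2, h3⟩ := hbase j hj.le (fun i hi => ih i hi (hi.trans hj))
      obtain ⟨g1, g2, -⟩ := hstep j (base j) hj h1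
      rw [hr j]
      exact ⟨g1, h2.trans g2, fun k hk => (h3 k hk).trans g2⟩
  obtain ⟨h1, h2, h3⟩ := hbase θ le_rfl hgood
  refine ⟨base θ, h1, h2, fun x hx hxb j hj => ?_⟩
  obtain ⟨g1, -, -⟩ := hbase j hj.le (fun i hi => hgood i (hi.trans hj))
  refine (hstep j (base j) hj g1).2.2 x hx ?_
  rw [← hr j, ← (h3 j hj).2, ← hxb, inter_assoc, Iio_inter_Iio, min_eq_right (h3 j hj).1]

theorem denseProp_inter {κ : Cardinal.{0}} (hreg : κ.IsRegular) {ι : Type 1}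
    (hι : #ι < Cardinal.lift.{1} κ)
    (E : ι → Set Ordinal.{0} → Prop) (hE : ∀ j, DenseProp κ (E j))
    (p0 : Ordinal.{0} × Set Ordinal.{0}) (hp0 : Valid κ p0) :
    ∃ q, Valid κ q ∧ Ext p0 q ∧ ∀ x ∈ cantor κ, x ∩ Iio q.1 = q.2 → ∀ j, E j x := by
  obtain ⟨c, hc, hce⟩ := Cardinal.lt_lift_iff.1 hι
  rw [← mk_Iio_ord] at hce
  obtain ⟨g⟩ := Cardinal.eq.1 hce
  obtain ⟨q, h1, h2, h3⟩ := denseProp_ord hreg (θ := c.ord) (Cardinal.ord_lt_ord.2 hc)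
    (fun j x => ∀ h : j < c.ord, E (g ⟨j, h⟩) x)
    (by
      intro j hj δ hδ t ht
      obtain ⟨δ', h1, h2, t', h3, h4, h5⟩ := hE (g ⟨j, hj⟩) δ hδ t ht
      exact ⟨δ', h1, h2, t', h3, h4, fun x hx hxt _ => h5 x hx hxt⟩) p0 hp0
  refine ⟨q, h1, h2, fun x hx hxq j => ?_⟩
  have := h3 x hx hxq (g.symm j).1 (g.symm j).2 (g.symm j).2
  simpa using this

theorem denseProp_shift {κ : Cardinal.{0}} {E : Set Ordinal.{0} → Prop} (hE : DenseProp κ E)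
    {ξ : Ordinal.{0}} (hξ : ξ < κ.ord) {p : Set Ordinal.{0}} (hp : p ⊆ Iio ξ) :
    DenseProp κ (fun y => E (p ∪ (y \ Iio ξ))) := by
  intro δ hδ t ht
  obtain ⟨δ', h1, h2, t', h3, h4, h5⟩ := hE (max δ ξ) (max_lt hδ hξ) (p ∪ (t \ Iio ξ)) (by
    rintro z (hz | hz)
    · exact mem_Iio.2 (lt_of_lt_of_le (mem_Iio.1 (hp hz)) (le_max_right _ _))
    · exact mem_Iio.2 (lt_of_lt_of_le (mem_Iio.1 (ht hz.1)) (le_max_left _ _)))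
  have hδδ' := (le_max_left δ ξ).trans h2
  have hξδ' := (le_max_right δ ξ).trans h2
  have h4' : ∀ z, (z ∈ t' ∧ z < max δ ξ) ↔ (z ∈ p ∨ (z ∈ t ∧ ¬ z < ξ)) := fun z => by
    have := Set.ext_iff.1 h4 z
    simpa using this
  refine ⟨δ', h1, hδδ', (t ∩ Iio ξ) ∪ (t' \ Iio ξ), ?_, ?_, ?_⟩
  · rintro z (hz | hz)
    · exact lt_of_lt_of_le (ht hz.1) hδδ'
    · exact h3 hz.1
  · ext z
    constructor
    · rintro ⟨hz | hz, hzδ⟩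
      · exact hz.1
      · rcases (h4' z).1 ⟨hz.1, lt_of_lt_of_le hzδ (le_max_left _ _)⟩ with h | h
        · exact absurd (hp h) hz.2
        · exact h.1
    · intro hz
      refine ⟨?_, ht hz⟩
      by_cases h : z < ξ
      · exact Or.inl ⟨hz, h⟩
      · exact Or.inr ⟨((h4' z).2 (Or.inr ⟨hz, h⟩)).1, h⟩
  · intro y hy hyt
    have hyt' : ∀ z, (z ∈ y ∧ z < δ') ↔ ((z ∈ t ∧ z < ξ) ∨ (z ∈ t' ∧ ¬ z < ξ)) := fun z => by
      have := Set.ext_iff.1 hyt z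
      simpa using this
    refine h5 _ ?_ ?_
    · rintro z (hz | hz)
      · exact lt_trans (hp hz) hξ
      · exact hy hz.1
    · ext z
      constructor
      · rintro ⟨hz | hz, hzδ⟩
        · exact ((h4' z).2 (Or.inl hz)).1
        · rcases (hyt' z).1 ⟨hz.1, hzδ⟩ with h | h
          · exact absurd h.2 hz.2
          · exact h.1
      · intro hz
        refine ⟨?_, h3 hz⟩
        by_cases h : z < ξ
        · rcases (h4' z).1 ⟨hz, lt_of_lt_of_le h (le_max_right _ _)⟩ with h' | h'
          · exact Or.inl h'
          · exact absurd h h'.2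
        · exact Or.inr ⟨((hyt' z).2 (Or.inr ⟨hz, h⟩)).1, h⟩

theorem mk_powerset_lt {κ : Cardinal.{0}} (hsl : ∀ x < κ, (2 : Cardinal.{0}) ^ x < κ)
    {a : Set Ordinal.{0}} (ha : #a < Cardinal.lift.{1} κ) : #(𝒫 a) < Cardinal.lift.{1} κ := by
  obtain ⟨c, hc, hce⟩ := Cardinal.lt_lift_iff.1 ha
  rw [Cardinal.mk_powerset, ← hce]
  have := Cardinal.lift_lt.{0, 1}.2 (hsl c hc)
  simpa using this

/-- The matching property. -/
def Match (κ : Cardinal.{0}) (D : Set Ordinal.{0} → Set (Set Ordinal.{0})) (a : Set Ordinal.{0})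
    (z : Ordinal.{0} × Ordinal.{0} × Set Ordinal.{0}) : Prop :=
  z.2.2 ⊆ Iio z.2.1 ∧ (∀ y ∈ z.2.2, z.1 ≤ y) ∧
    (∀ e ⊆ a, ∀ x ∈ cantor κ, x ∩ Iio z.2.1 = (x ∩ Iio z.1) ∪ z.2.2 → x ∈ D e) ∧ z.1 ≤ z.2.1

theorem exists_match {κ lam : Cardinal.{0}} (hreg : κ.IsRegular)
    (hsl : ∀ x < κ, (2 : Cardinal.{0}) ^ x < κ) (D : Set Ordinal.{0} → Set (Set Ordinal.{0}))
    (hD : ∀ e ∈ smallSet κ lam, DenseOpen κ κ (D e)) {a : Set Ordinal.{0}}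
    (ha : a ∈ smallSet κ lam) {ξ : Ordinal.{0}} (hξ : ξ < κ.ord) :
    ∃ δ < κ.ord, ∃ u, Match κ D a (ξ, δ, u) := by
  have hsm : #(𝒫 a × 𝒫 (Iio ξ)) < Cardinal.lift.{1} κ := by
    rw [Cardinal.mk_prod, Cardinal.lift_id, Cardinal.lift_id]
    exact Cardinal.mul_lt_of_lt (aleph0_le_lift hreg) (mk_powerset_lt hsl ha.2)
      (mk_powerset_lt hsl (mk_Iio_lt_lift hξ))
  obtain ⟨⟨δ, u⟩, h1, h2, h3⟩ := denseProp_inter hreg hsm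
    (fun j y => (j.2.1 ∪ (y \ Iio ξ)) ∈ D j.1.1) (by
      rintro ⟨⟨e, he⟩, ⟨p, hp⟩⟩
      have he' : e ∈ smallSet κ lam :=
        ⟨he.trans ha.1, lt_of_le_of_lt (Cardinal.mk_le_mk_of_subset he) ha.2⟩
      exact denseProp_shift ((hD e he').denseProp hreg) hξ hp) (ξ, ∅) ⟨hξ, empty_subset _⟩
  have hu : ∀ y ∈ u, ξ ≤ y := by
    intro y hy
    by_contra h
    have : y ∈ u ∩ Iio ξ := ⟨hy, not_le.1 h⟩
    have h22 : u ∩ Iio ξ = ∅ := h2.2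
    rw [h22] at this
    exact this
  refine ⟨δ, h1.1, u, h1.2, hu, ?_, h2.1⟩
  intro e he x hx hxu
  have := h3 (x \ Iio ξ) (fun z hz => hx hz.1) (by
    ext z
    have hz := Set.ext_iff.1 hxu z
    constructor
    · rintro ⟨⟨hzx, hzξ⟩, hzδ⟩
      rcases hz.1 ⟨hzx, hzδ⟩ with h | h
      · exact absurd h.2 hzξ
      · exact h
    · intro hzu
      have h := hz.2 (Or.inr hzu)
      exact ⟨⟨h.1, not_lt.2 (hu z hzu)⟩, h.2⟩) (⟨e, he⟩, ⟨x ∩ Iio ξ, inter_subset_right⟩)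
  have hxe : (x ∩ Iio ξ) ∪ ((x \ Iio ξ) \ Iio ξ) = x := by
    ext z
    by_cases h : z < ξ <;> simp [h]
  simpa only [hxe] using this

theorem mk_codes {κ : Cardinal.{0}} (hreg : κ.IsRegular)
    (hsl : ∀ x < κ, (2 : Cardinal.{0}) ^ x < κ) :
    #(Iio κ.ord ×ˢ Iio κ.ord ×ˢ {u : Set Ordinal.{0} | ∃ δ < κ.ord, u ⊆ Iio δ} :
      Set (Ordinal.{0} × Ordinal.{0} × Set Ordinal.{0})) ≤ Cardinal.lift.{1} κ := by
  have hU : #{u : Set Ordinal.{0} | ∃ δ < κ.ord, u ⊆ Iio δ} ≤ Cardinal.lift.{1} κ := by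
    have : {u : Set Ordinal.{0} | ∃ δ < κ.ord, u ⊆ Iio δ} = ⋃ δ : Iio κ.ord, 𝒫 (Iio δ.1) := by
      ext u
      simp
    rw [this]
    refine (Cardinal.mk_iUnion_le _).trans ?_
    rw [mk_Iio_ord]
    refine (mul_le_mul_right ?_ _).trans (Cardinal.mul_eq_self (aleph0_le_lift hreg)).le
    refine ciSup_le' fun δ => ?_
    exact (mk_powerset_lt hsl (mk_Iio_lt_lift δ.2)).le
  rw [Cardinal.mk_setProd, Cardinal.mk_setProd, mk_Iio_ord]
  have hk := (Cardinal.mul_eq_self (aleph0_le_lift hreg)).le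
  calc _ ≤ Cardinal.lift.{1} κ * (Cardinal.lift.{1} κ * Cardinal.lift.{1} κ) := by gcongr
    _ ≤ _ := by rw [Cardinal.mul_eq_self (aleph0_le_lift hreg)]; exact hk

end PaperFormal

namespace PaperFormal

theorem arrow_rel {κ lam : Cardinal.{0}}
    (h : ArrowPKKsemi κ lam (Ikl κ lam) κ.ord) (R : Ordinal.{0} → Ordinal.{0} → Prop)
    {A : Set (Set Ordinal.{0})} (hA : A ∈ plusOf κ lam (Ikl κ lam)) :
    (∃ B ⊆ A, B ∈ plusOf κ lam (Ikl κ lam) ∧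
      ∀ a ∈ B, ∀ b ∈ B, supK κ a < supK κ b → R (supK κ a) (supK κ b)) ∨
    (∃ e : Ordinal.{0} → Ordinal.{0}, (∀ i < κ.ord, ∀ j < κ.ord, i < j → e i < e j) ∧
      (∀ i < κ.ord, ∃ a ∈ A, supK κ a = e i) ∧
      ∀ i < κ.ord, ∀ j < κ.ord, i < j → ¬ R (e i) (e j)) := by
  classical
  obtain ⟨B, hBA, ⟨hB, h0⟩ | ⟨⟨e, he, heB⟩, h1⟩⟩ := h (fun c c' => if R c c' then 0 else 1) A hA
  · refine Or.inl ⟨B, hBA, hB, fun a ha b hb hab => ?_⟩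
    have := h0 _ ⟨a, ha, b, hb, hab, rfl⟩
    by_contra hcon
    simp [hcon] at this
  · have hmem : ∀ i < κ.ord, ∃ a ∈ B, supK κ a = e i := by
      intro i hi
      have : e i ∈ e '' Iio κ.ord := ⟨i, hi, rfl⟩
      rw [heB] at this
      exact this
    refine Or.inr ⟨e, he, fun i hi => ?_, fun i hi j hj hij => ?_⟩
    · obtain ⟨a, ha, hae⟩ := hmem i hi
      exact ⟨a, hBA ha, hae⟩
    · obtain ⟨a, ha, hae⟩ := hmem i hi
      obtain ⟨b, hb, hbe⟩ := hmem j hj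
      have := h1 _ ⟨a, ha, b, hb, by rw [hae, hbe]; exact he i hi j hj hij, rfl⟩
      intro hR
      rw [hae, hbe] at this
      simp [hR] at this

theorem iii_generic {κ lam : Cardinal.{0}} (hreg : κ.IsRegular) (hlt : κ < lam)
    (hsl : ∀ x < κ, (2 : Cardinal.{0}) ^ x < κ)
    (h : ArrowPKKsemi κ lam (Ikl κ lam) κ.ord)
    (D : Set Ordinal.{0} → Set (Set Ordinal.{0})) (hD : ∀ e ∈ smallSet κ lam, DenseOpen κ κ (D e)) :
    ∃ x ∈ cantor κ, ∀ e ∈ smallSet κ lam, x ∈ D e := by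
  have hlim := Cardinal.isSuccLimit_ord hreg.aleph0_le
  obtain ⟨dec, hdec, hdec'⟩ := exists_dec hreg _ (mk_codes hreg hsl)
    ⟨(0, 0, ∅), hreg.ord_pos, hreg.ord_pos, 0, hreg.ord_pos, empty_subset _⟩
  set A : Set (Set Ordinal.{0}) := {b | ∃ a ∈ smallSet κ lam, ∃ c < κ.ord, b = insert c a ∧
    (∀ x ∈ a, x < κ.ord → x < c ∧ x < (dec c).1) ∧ Match κ D a (dec c)} with hAdef
  have hA' : ∀ b ∈ A, ∃ a ∈ smallSet κ lam, supK κ b < κ.ord ∧ b = insert (supK κ b) a ∧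
      (∀ x ∈ a, x < κ.ord → x < supK κ b ∧ x < (dec (supK κ b)).1) ∧
      Match κ D a (dec (supK κ b)) := by
    rintro b ⟨a, ha, c, hc, hb, hx, hm⟩
    have hs : supK κ b = c := by
      rw [hb]
      exact supK_insert hc fun x hxa hk => (hx x hxa hk).1
    rw [hs]
    exact ⟨a, ha, hc, hb, hx, hm⟩
  have hApos : A ∈ plusOf κ lam (Ikl κ lam) := by
    rw [mem_plus_iff]
    constructor
    · rintro b ⟨a, ha, c, hc, rfl, -⟩
      exact insert_small hreg ha (ord_lt_of_lt hlt hc)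
    · intro a ha
      obtain ⟨ξ, hξ, hξa⟩ := smallSet_bdd hreg ha
      obtain ⟨δ, hδ, u, hm⟩ := exists_match hreg hsl D hD ha hξ
      obtain ⟨c, hc, hξc, hcd⟩ := hdec' (ξ, δ, u) ⟨hξ, hδ, δ, hδ, hm.1⟩ ξ hξ
      refine ⟨insert c a, ⟨a, ha, c, hc, rfl, ?_, ?_⟩, subset_insert _ _⟩
      · intro x hx hk
        rw [hcd]
        exact ⟨(hξa x hx hk).trans hξc, hξa x hx hk⟩
      · rw [hcd]
        exact hm
  have hL : ∀ B ⊆ A, B ∈ plusOf κ lam (Ikl κ lam) → ∀ e ∈ smallSet κ lam, ∃ b ∈ B, ∃ a, e ⊆ a ∧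
      (∀ x ∈ a, x < κ.ord → x < (dec (supK κ b)).1) ∧ Match κ D a (dec (supK κ b)) := by
    intro B hBA hB e he
    obtain ⟨δ, hδ, hδe⟩ := smallSet_bdd hreg he
    obtain ⟨b, hb, hsub⟩ := (mem_plus_iff.1 hB).2 _ (insert_small hreg he (ord_lt_of_lt hlt hδ))
    have hδb : δ ≤ supK κ b := le_supK (hsub (mem_insert _ _)) hδ
    obtain ⟨a, ha, hc, hba, hx, hm⟩ := hA' b (hBA hb)
    refine ⟨b, hb, a, ?_, fun x hxa hk => (hx x hxa hk).2, hm⟩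
    intro x hxe
    have hxb : x ∈ insert (supK κ b) a := hba ▸ hsub (mem_insert_of_mem _ hxe)
    rcases hxb with hxc | hxa
    · have := hδe x hxe (hxc ▸ hc)
      exact absurd (hxc ▸ this) (not_lt.2 hδb)
    · exact hxa
  -- first step
  obtain ⟨B1, hB1A, hB1, hR1⟩ : ∃ B ⊆ A, B ∈ plusOf κ lam (Ikl κ lam) ∧
      ∀ a ∈ B, ∀ b ∈ B, supK κ a < supK κ b → (dec (supK κ a)).1 ≤ (dec (supK κ b)).1 := by
    rcases arrow_rel h (fun c c' => (dec c).1 ≤ (dec c').1) hApos with h1 | ⟨e, he, -, hne⟩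
    · exact h1
    · exfalso
      obtain ⟨_, ⟨i, hi, rfl⟩, hmin⟩ := WellFounded.has_min (r := (· < ·)) wellFounded_lt
        ((fun i => (dec (e i)).1) '' Iio κ.ord) ⟨_, 0, hreg.ord_pos, rfl⟩
      have hs := hlim.succ_lt hi
      exact hmin _ ⟨Order.succ i, hs, rfl⟩ (not_le.1 (hne i hi _ hs (Order.lt_succ i)))
  -- second step
  obtain ⟨B2, hB2, hB2p, hR2⟩ : ∃ B ⊆ B1, B ∈ plusOf κ lam (Ikl κ lam) ∧
      ∀ a ∈ B, ∀ b ∈ B, supK κ a < supK κ b → (dec (supK κ a)).2.1 ≤ (dec (supK κ b)).1 := by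
    rcases arrow_rel h (fun c c' => (dec c).2.1 ≤ (dec c').1) hB1 with h1 | ⟨e, he, heB, hne⟩
    · exact h1
    · exfalso
      have h0 := hreg.ord_pos
      have hδ : (dec (e 0)).2.1 < κ.ord := (hdec (e 0)).2.1
      obtain ⟨b, hb, a, hsub, hx, -⟩ := hL B1 hB1A hB1 _
        (insert_small hreg (empty_small hreg) (ord_lt_of_lt hlt hδ))
      have hlt1 := hx _ (hsub (mem_insert _ _)) hδ
      have hbk : supK κ b < κ.ord := supK_lt hreg ((mem_plus_iff.1 hB1).1 hb)
      have hs := hlim.succ_lt hbk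
      have hge := le_of_strict he _ hs
      obtain ⟨b', hb', hbe⟩ := heB _ hs
      have hle := hR1 b hb b' hb' (by rw [hbe]; exact (Order.lt_succ _).trans_le hge)
      rw [hbe] at hle
      exact hne 0 h0 _ hs (Order.bot_lt_succ _) (hlt1.le.trans hle)
  refine ⟨{z | ∃ b ∈ B2, z ∈ (dec (supK κ b)).2.2}, ?_, ?_⟩
  · rintro z ⟨b, hb, hz⟩
    obtain ⟨a, ha, hc, hba, hx, hm⟩ := hA' b (hB1A (hB2 hb))
    exact mem_Iio.2 (lt_trans (mem_Iio.1 (hm.1 hz)) (mem_Iio.1 (hdec _).2.1))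
  · intro e he
    obtain ⟨b, hb, a, hea, -, hm⟩ := hL B2 (hB2.trans hB1A) hB2p e he
    refine hm.2.2.1 e hea _ ?_ ?_
    · rintro z ⟨b, hb, hz⟩
      obtain ⟨a, ha, hc, hba, hx, hm⟩ := hA' b (hB1A (hB2 hb))
      exact mem_Iio.2 (lt_trans (mem_Iio.1 (hm.1 hz)) (mem_Iio.1 (hdec _).2.1))
    · ext z
      constructor
      · rintro ⟨⟨b', hb', hz⟩, hzδ⟩
        obtain ⟨a', -, -, -, -, hm'⟩ := hA' b' (hB1A (hB2 hb'))
        rcases lt_trichotomy (supK κ b') (supK κ b) with hl | hl | hl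
        · exact Or.inl ⟨⟨b', hb', hz⟩, lt_of_lt_of_le (mem_Iio.1 (hm'.1 hz)) (hR2 b' hb' b hb hl)⟩
        · rw [hl] at hz
          exact Or.inr hz
        · have h1 := (hR2 b hb b' hb' hl).trans (hm'.2.1 z hz)
          exact absurd hzδ (not_lt.2 h1)
      · rintro (⟨⟨b', hb', hz⟩, hzξ⟩ | hz)
        · refine ⟨⟨b', hb', hz⟩, ?_⟩
          exact mem_Iio.2 (lt_of_lt_of_le (mem_Iio.1 hzξ) hm.2.2.2)
        · exact ⟨⟨b, hb, hz⟩, hm.1 hz⟩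

theorem meager_singleton {κ : Cardinal.{0}} (hreg : κ.IsRegular) {x : Set Ordinal.{0}}
    (hx : x ∈ cantor κ) : Meager κ κ {x} := by
  refine ⟨singleton_subset_iff.2 hx, {cantor κ \ {x}}, singleton_nonempty _, ?_, ?_, ?_⟩
  · rw [Cardinal.mk_singleton]
    exact Cardinal.one_le_aleph0.trans (aleph0_le_lift hreg)
  · rintro _ rfl
    have hone : ∀ z : Ordinal.{0}, #({z} : Set Ordinal.{0}) < Cardinal.lift.{1} κ := fun z => by
      rw [Cardinal.mk_singleton]
      exact Cardinal.one_lt_aleph0.trans_le (aleph0_le_lift hreg)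
    refine ⟨sdiff_subset, ?_, ?_⟩
    · rintro y ⟨hy, hyx⟩
      have hne : ∃ z, ¬ (z ∈ y ↔ z ∈ x) := by
        by_contra hcon
        push Not at hcon
        exact hyx (Set.ext hcon)
      obtain ⟨z, hz⟩ := hne
      have hzk : z ∈ Iio κ.ord := by
        by_cases h : z ∈ y
        · exact hy h
        · by_cases h' : z ∈ x
          · exact hx h'
          · exact absurd (iff_of_false h h') hz
      refine ⟨{z}, y ∩ {z}, ⟨singleton_subset_iff.2 hzk, inter_subset_right, hone z⟩,
        ⟨hy, rfl⟩, ?_⟩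
      rintro w ⟨hw, hwz⟩
      refine ⟨hw, ?_⟩
      rintro rfl
      apply hz
      have := Set.ext_iff.1 hwz z
      simp only [mem_inter_iff, mem_singleton_iff, and_true] at this
      exact this.symm
    · rintro a t ⟨ha, hta, hsm⟩
      obtain ⟨δ, hδ, hb⟩ := small_bdd hreg hsm ha
      have hδa : δ ∉ a := fun h => lt_irrefl _ (hb δ h)
      by_cases h : δ ∈ x
      · refine ⟨t, ⟨hta.trans ha, inter_eq_left.2 hta⟩, hta.trans ha, ?_⟩
        rintro rfl
        exact hδa (hta h)
      · have hs : insert δ t ⊆ Iio κ.ord := insert_subset hδ (hta.trans ha)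
        refine ⟨insert δ t, ⟨hs, ?_⟩, hs, ?_⟩
        · rw [insert_inter_of_notMem hδa, inter_eq_left.2 hta]
        · rintro rfl
          exact h (mem_insert _ _)
  · rw [sInter_singleton]
    ext y
    simp

theorem covM_mem {κ : Cardinal.{0}} (hreg : κ.IsRegular) :
    ∃ Y : Set (Set (Set Ordinal.{0})), ((∀ W ∈ Y, Meager κ κ W) ∧ ⋃₀ Y = cantor κ) ∧
      Cardinal.lift.{1} (covM κ κ) = #Y := by
  have := csInf_mem (s := {c : Cardinal.{0} | ∃ Y : Set (Set (Set Ordinal.{0})),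
    ((∀ W ∈ Y, Meager κ κ W) ∧ ⋃₀ Y = cantor κ) ∧ Cardinal.lift.{1} c = #Y}) (by
      refine ⟨2 ^ κ, singleton '' cantor κ, ⟨?_, ?_⟩, ?_⟩
      · rintro _ ⟨x, hx, rfl⟩
        exact meager_singleton hreg hx
      · ext x
        simp
      · rw [Cardinal.mk_image_eq singleton_injective]
        have h1 : #(cantor κ) = #(𝒫 (Iio κ.ord)) := rfl
        rw [h1, Cardinal.mk_powerset, mk_Iio_ord]
        simp)
  exact this

theorem lift_le_smallSet {κ lam : Cardinal.{0}} (hreg : κ.IsRegular) (hlt : κ < lam) :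
    Cardinal.lift.{1} κ ≤ #(smallSet κ lam) := by
  rw [← mk_Iio_ord]
  refine Cardinal.mk_le_of_injective (f := fun c : Iio κ.ord =>
    (⟨{c.1}, by
      have := insert_small hreg (empty_small (lam := lam) hreg) (ord_lt_of_lt hlt c.2)
      simpa using this⟩ : smallSet κ lam)) ?_
  intro c d hcd
  have := congrArg Subtype.val hcd
  exact Subtype.ext (singleton_injective this)

theorem iii_imp_cov {κ lam : Cardinal.{0}} (hreg : κ.IsRegular) (hlt : κ < lam)
    (hsl : ∀ x < κ, (2 : Cardinal.{0}) ^ x < κ)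
    (h : ArrowPKKsemi κ lam (Ikl κ lam) κ.ord) :
    #(smallSet κ lam) < Cardinal.lift.{1} (covM κ κ) := by
  classical
  by_contra hcon
  rw [not_lt] at hcon
  obtain ⟨Y, ⟨hY, hYc⟩, hYe⟩ := covM_mem hreg
  rw [hYe] at hcon
  choose X hXne hXle hXD hXW using fun W : Y => (hY W.1 W.2).2
  have hk := lift_le_smallSet hreg hlt
  have hinf := (aleph0_le_lift hreg).trans hk
  have hle : #(⋃ W : Y, X W : Set (Set (Set Ordinal.{0}))) ≤ #(smallSet κ lam) := by
    refine (Cardinal.mk_iUnion_le _).trans ?_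
    calc _ ≤ #(smallSet κ lam) * #(smallSet κ lam) := by
          gcongr
          exact ciSup_le' fun W => (hXle W).trans hk
      _ = _ := Cardinal.mul_eq_self hinf
  obtain ⟨W0, hW0, -⟩ : (∅ : Set Ordinal.{0}) ∈ ⋃₀ Y := by
    rw [hYc]
    exact empty_subset _
  obtain ⟨D0, hD0⟩ := hXne ⟨W0, hW0⟩
  obtain ⟨f⟩ := hle
  have : Nonempty (⋃ W : Y, X W : Set (Set (Set Ordinal.{0}))) :=
    ⟨⟨D0, mem_iUnion.2 ⟨_, hD0⟩⟩⟩
  let g := Function.invFun f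
  have hg : ∀ d, g (f d) = d := Function.leftInverse_invFun f.injective
  obtain ⟨x, hx, hxD⟩ := iii_generic hreg hlt hsl h
    (fun e => if he : e ∈ smallSet κ lam then (g ⟨e, he⟩).1 else ∅) (by
      intro e he
      simp only [he, dif_pos]
      obtain ⟨W, hW⟩ := mem_iUnion.1 (g ⟨e, he⟩).2
      exact hXD W _ hW)
  rw [← hYc] at hx
  obtain ⟨W, hW, hxW⟩ := hx
  have hmem : x ∈ W ∩ ⋂₀ X ⟨W, hW⟩ := by
    refine ⟨hxW, fun d hd => ?_⟩
    have hdm : d ∈ (⋃ W : Y, X W) := mem_iUnion.2 ⟨_, hd⟩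
    have := hxD (f ⟨d, hdm⟩).1 (f ⟨d, hdm⟩).2
    simpa [hg] using this
  rw [hXW ⟨W, hW⟩] at hmem
  exact hmem

end PaperFormal

namespace PaperFormal

/-- The following are equivalent: (i) `κ` is weakly compact and
`λ^{<κ} < cov(M_{κ,κ})`; (ii) `I_{κ,λ}⁺ →_κ (I_{κ,λ}⁺)²`;
(iii) `I_{κ,λ}⁺ →_{κ,κ} (I_{κ,λ}⁺; κ)²`. -/
theorem weaklyCompact_iff_arrow (κ lam : Cardinal.{0}) (hreg : κ.IsRegular) (huc : ℵ₀ < κ)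
    (hlt : κ < lam) :
    ((WeaklyCompact κ ∧ #(smallSet κ lam) < Cardinal.lift.{1} (covM κ κ)) ↔
        ArrowPConst κ lam (Ikl κ lam)) ∧
      (ArrowPConst κ lam (Ikl κ lam) ↔ ArrowPKKsemi κ lam (Ikl κ lam) κ.ord) := by
  have wc := fun h3 : ArrowPKKsemi κ lam (Ikl κ lam) κ.ord => iii_imp_wc hreg hlt h3
  have cov := fun h3 : ArrowPKKsemi κ lam (Ikl κ lam) κ.ord =>
    iii_imp_cov hreg hlt (wc_strongLimit hreg huc (wc h3)) h3
  refine ⟨⟨fun h => i_imp_ii hreg huc hlt h.1 h.2, fun h => ?_⟩,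
    ⟨fun h => ii_imp_iii hreg hlt h, fun h => i_imp_ii hreg huc hlt (wc h) (cov h)⟩⟩
  exact ⟨wc (ii_imp_iii hreg hlt h), cov (ii_imp_iii hreg hlt h)⟩

end PaperFormal
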